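/- arXiv:2305.13797 — 7 statements merged into one kernel-verified Lean document; each statement's English description precedes it below -/
import Mathlib

section
/- Let n ≥ 2, let ξ be a real number with 1 ≤ ξ ≤ n−1, and let C ∈ ℝ^{n×n} be a matrix none of whose rows is constant. Suppose ε ∈ ℝⁿ has all entries positive and the matrix P defined by P_ij = exp(−C_ij/ε_i) / ∑_ℓ exp(−C_iℓ/ε_i) satisfies H(P_{i:}) = log ξ + 1 for every row i. Then P belongs to H_ξ and is the unique minimizer of the linear functional P ↦ ⟨P, C⟩ over H_ξ. -/
open Finset

/-- Entropy of a nonnegative vector, with the convention `0 * log 0 = 0`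
(which holds since `Real.log 0 = 0` in Mathlib). -/
noncomputable def ent {n : ℕ} (p : Fin n → ℝ) : ℝ :=
  -∑ i, p i * (Real.log (p i) - 1)

/-- Membership in the set `H_ξ`: nonnegative entries, unit row sums, and
row-wise entropy at least `log ξ + 1`. -/
def Hxi {n : ℕ} (ξ : ℝ) (P : Fin n → Fin n → ℝ) : Prop :=
  (∀ i j, 0 ≤ P i j) ∧ (∀ i, ∑ j, P i j = 1) ∧ (∀ i, Real.log ξ + 1 ≤ ent (P i))

/-- Frobenius inner product. -/
noncomputable def frob {n : ℕ} (P C : Fin n → Fin n → ℝ) : ℝ :=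
  ∑ i, ∑ j, P i j * C i j

lemma gibbs_term (p q : ℝ) (hp : 0 < p) (hq : 0 ≤ q) :
    0 ≤ q * Real.log q - q * Real.log p - q + p ∧
      (q * Real.log q - q * Real.log p - q + p = 0 → q = p) := by
  rcases hq.eq_or_lt with rfl | hq
  · simp only [zero_mul]
    exact ⟨by linarith, fun h => by linarith⟩
  · have hpq : 0 < p / q := div_pos hp hq
    have hl : Real.log (p / q) = Real.log p - Real.log q := Real.log_div hp.ne' hq.ne'
    have hm : q * (p / q) = p := by field_simp
    refine ⟨?_, fun h => ?_⟩
    · have := mul_le_mul_of_nonneg_left (Real.log_le_sub_one_of_pos hpq) hq.le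
      rw [hl] at this
      nlinarith
    · by_contra hne
      have h1 : p / q ≠ 1 := fun h1 => hne (by rw [div_eq_one_iff_eq hq.ne'] at h1; exact h1.symm)
      have := mul_lt_mul_of_pos_left (Real.log_lt_sub_one_of_pos hpq h1) hq
      rw [hl] at this
      nlinarith

lemma row_bound {n : ℕ} (c p q : Fin n → ℝ) (e L : ℝ) (he : 0 < e)
    (hp : ∀ j, 0 < p j) (hc : ∀ j, c j = -e * (Real.log (p j) + L))
    (hps : ∑ j, p j = 1) (hq : ∀ j, 0 ≤ q j) (hqs : ∑ j, q j = 1)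
    (hent : ent p ≤ ent q) :
    ∑ j, p j * c j ≤ ∑ j, q j * c j ∧ (∑ j, q j * c j = ∑ j, p j * c j → q = p) := by
  have hg : ∀ j, 0 ≤ q j * Real.log (q j) - q j * Real.log (p j) - q j + p j :=
    fun j => (gibbs_term _ _ (hp j) (hq j)).1
  have e1 : ∀ r : Fin n → ℝ, ∑ j, r j = 1 →
      ∑ j, r j * c j = -e * ∑ j, r j * Real.log (p j) - e * L := by
    intro r hr
    have : ∀ j, r j * c j = -e * (r j * Real.log (p j)) - e * L * r j := by
      intro j; rw [hc]; ring
    simp only [this, Finset.sum_sub_distrib, ← Finset.mul_sum, hr, mul_one]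
  have e2 : ∀ r : Fin n → ℝ, ∑ j, r j = 1 → ent r = 1 - ∑ j, r j * Real.log (r j) := by
    intro r hr
    simp only [ent, mul_sub, mul_one, Finset.sum_sub_distrib, hr]
    ring
  rw [e2 p hps, e2 q hqs] at hent
  have hS : ∑ j, (q j * Real.log (q j) - q j * Real.log (p j) - q j + p j)
      = ∑ j, q j * Real.log (q j) - ∑ j, q j * Real.log (p j) := by
    simp only [Finset.sum_sub_distrib, Finset.sum_add_distrib, hqs, hps]
    ring
  have hS0 := Finset.sum_nonneg (fun j (_ : j ∈ Finset.univ) => hg j)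
  rw [e1 p hps, e1 q hqs]
  refine ⟨by nlinarith, fun h => ?_⟩
  have h' : ∑ j, q j * Real.log (p j) = ∑ j, p j * Real.log (p j) :=
    mul_left_cancel₀ he.ne' (by linarith)
  have hz : ∑ j, (q j * Real.log (q j) - q j * Real.log (p j) - q j + p j) = 0 := by linarith
  rw [Finset.sum_eq_zero_iff_of_nonneg (fun j _ => hg j)] at hz
  funext j
  exact (gibbs_term _ _ (hp j) (hq j)).2 (hz j (Finset.mem_univ j))

theorem entropic_affinity_is_unique_minimizer
    {n : ℕ} (hn : 2 ≤ n) (ξ : ℝ) (hξ1 : 1 ≤ ξ) (hξ2 : ξ ≤ (n : ℝ) - 1)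
    (C : Fin n → Fin n → ℝ) (hC : ∀ i, ∃ j k, C i j ≠ C i k)
    (ε : Fin n → ℝ) (hε : ∀ i, 0 < ε i)
    (P : Fin n → Fin n → ℝ)
    (hP : ∀ i j, P i j = Real.exp (-C i j / ε i) / ∑ l, Real.exp (-C i l / ε i))
    (hent : ∀ i, ent (P i) = Real.log ξ + 1) :
    Hxi ξ P ∧ (∀ Q, Hxi ξ Q → frob P C ≤ frob Q C) ∧
      (∀ Q, Hxi ξ Q → frob Q C = frob P C → Q = P) := by
  have hZ : ∀ i, 0 < ∑ l, Real.exp (-C i l / ε i) := fun i =>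
    Finset.sum_pos (fun l _ => Real.exp_pos _) ⟨i, Finset.mem_univ i⟩
  have hpos : ∀ i j, 0 < P i j := fun i j => by
    rw [hP]; exact div_pos (Real.exp_pos _) (hZ i)
  have hsum : ∀ i, ∑ j, P i j = 1 := fun i => by
    simp only [hP, ← Finset.sum_div]
    exact div_self (hZ i).ne'
  have hc : ∀ i j, C i j
      = -ε i * (Real.log (P i j) + Real.log (∑ l, Real.exp (-C i l / ε i))) := fun i j => by
    rw [hP, Real.log_div (Real.exp_pos _).ne' (hZ i).ne', Real.log_exp]
    have := (hε i).ne'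
    field_simp
    ring
  have key : ∀ Q, Hxi ξ Q → ∀ i, _ := fun Q hQ i =>
    row_bound (C i) (P i) (Q i) (ε i) _ (hε i) (hpos i) (hc i) (hsum i) (hQ.1 i) (hQ.2.1 i)
      (by rw [hent i]; exact hQ.2.2 i)
  refine ⟨⟨fun i j => (hpos i j).le, hsum, fun i => (hent i).ge⟩, fun Q hQ => ?_,
    fun Q hQ h => ?_⟩
  · exact Finset.sum_le_sum fun i _ => (key Q hQ i).1
  · have h2 := (Finset.sum_eq_sum_iff_of_le (fun i _ => (key Q hQ i).1)).1 h.symm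
    funext i
    exact (key Q hQ i).2 (h2 i (Finset.mem_univ i)).symm
end

section
/- Let n ≥ 2, let ξ be a real number with 1 ≤ ξ ≤ n−1, and let C ∈ ℝ^{n×n} be symmetric with nonnegative entries and C_ij = 0 iff i = j. Suppose P ∈ H_ξ ∩ S has all entries positive, and there exist γ ∈ ℝⁿ with nonnegative entries, λ ∈ ℝⁿ, and Γ ∈ ℝ^{n×n} such that the stationarity condition C_ij + γ_i log P_ij − λ_i + Γ_ij − Γ_ji = 0 holds for all i, j, and the complementary slackness condition γ_i (H(P_{i:}) − (log ξ + 1)) = 0 holds for all i. Then γ_i > 0 for at least n−1 indices i ∈ {1,…,n}. -/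
open Finset

/-- For KKT points of the SEA problem, at least `n - 1` of the dual variables
`γ_i` associated with the entropy constraints are positive. -/
theorem sea_dual_variables_positive
    {n : ℕ} (hn : 2 ≤ n) (ξ : ℝ) (hξ1 : 1 ≤ ξ) (hξ2 : ξ ≤ (n : ℝ) - 1)
    (C : Fin n → Fin n → ℝ) (hCsym : ∀ i j, C i j = C j i)
    (hCnn : ∀ i j, 0 ≤ C i j) (hCzero : ∀ i j, C i j = 0 ↔ i = j)
    (P : Fin n → Fin n → ℝ) (hP : Hxi ξ P) (hPsym : ∀ i j, P i j = P j i)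
    (hPpos : ∀ i j, 0 < P i j)
    (γ : Fin n → ℝ) (hγ : ∀ i, 0 ≤ γ i) (lam : Fin n → ℝ) (Γ : Fin n → Fin n → ℝ)
    (hstat : ∀ i j, C i j + γ i * Real.log (P i j) - lam i + Γ i j - Γ j i = 0)
    (hslack : ∀ i, γ i * (ent (P i) - (Real.log ξ + 1)) = 0) :
    ∃ i₀ : Fin n, ∀ i : Fin n, i ≠ i₀ → 0 < γ i := by
  by_cases h : ∃ a, γ a = 0
  · obtain ⟨a, ha⟩ := h
    refine ⟨a, fun b hb => lt_of_le_of_ne (hγ b) fun hb0 => hb ?_⟩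
    have h1 := hstat a a
    have h2 := hstat b b
    have h3 := hstat a b
    have h4 := hstat b a
    have c1 := (hCzero a a).2 rfl
    have c2 := (hCzero b b).2 rfl
    have c3 := hCsym a b
    rw [ha] at h1 h3
    rw [← hb0] at h2 h4
    exact (hCzero b a).1 (by linarith)
  · push Not at h
    exact ⟨⟨0, by omega⟩, fun i _ => lt_of_le_of_ne (hγ i) (h i).symm⟩
end

section
/- Let n ≥ 2, let ξ be a real number with 1 ≤ ξ ≤ n−1, and let C ∈ ℝ^{n×n} be symmetric with nonnegative entries and C_ij = 0 iff i = j. Suppose P ∈ H_ξ ∩ S has all entries positive, and there exist γ ∈ ℝⁿ with all entries positive, λ ∈ ℝⁿ, and Γ ∈ ℝ^{n×n} such that C_ij + γ_i log P_ij − λ_i + Γ_ij − Γ_ji = 0 for all i, j, and γ_i (H(P_{i:}) − (log ξ + 1)) = 0 for all i. Then H(P_{i:}) = log ξ + 1 for every i, and P_ij = exp((λ_i + λ_j − 2 C_ij)/(γ_i + γ_j)) for all i, j. -/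
open Finset

theorem sea_form_when_gamma_positive
    {n : ℕ} (hn : 2 ≤ n) (ξ : ℝ) (hξ1 : 1 ≤ ξ) (hξ2 : ξ ≤ (n : ℝ) - 1)
    (C : Fin n → Fin n → ℝ) (hCsym : ∀ i j, C i j = C j i)
    (hCnn : ∀ i j, 0 ≤ C i j) (hCzero : ∀ i j, C i j = 0 ↔ i = j)
    (P : Fin n → Fin n → ℝ) (hP : Hxi ξ P) (hPsym : ∀ i j, P i j = P j i)
    (hPpos : ∀ i j, 0 < P i j)
    (γ : Fin n → ℝ) (hγ : ∀ i, 0 < γ i) (lam : Fin n → ℝ) (Γ : Fin n → Fin n → ℝ)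
    (hstat : ∀ i j, C i j + γ i * Real.log (P i j) - lam i + Γ i j - Γ j i = 0)
    (hslack : ∀ i, γ i * (ent (P i) - (Real.log ξ + 1)) = 0) :
    (∀ i, ent (P i) = Real.log ξ + 1) ∧
      ∀ i j, P i j = Real.exp ((lam i + lam j - 2 * C i j) / (γ i + γ j)) := by
  refine ⟨fun i => ?_, fun i j => ?_⟩
  · have h := (mul_eq_zero.mp (hslack i)).resolve_left (hγ i).ne'
    linarith
  · have h1 := hstat i j
    have h2 := hstat j i
    rw [hCsym j i, hPsym j i] at h2
    have hpos : 0 < γ i + γ j := add_pos (hγ i) (hγ j)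
    have h : (lam i + lam j - 2 * C i j) / (γ i + γ j) = Real.log (P i j) := by
      rw [div_eq_iff hpos.ne']
      linarith
    rw [h, Real.exp_log (hPpos i j)]
end

section
/- Let n ≥ 1 and let K ∈ ℝ^{n×n} have all entries positive. The unique minimizer of P ↦ KL(P|K) over symmetric matrices P ∈ ℝ^{n×n} with nonnegative entries is the matrix P* with entries P*_ij = √(K_ij · K_ji) (the entrywise geometric mean of K and Kᵀ). -/
open Finset

/-- Kullback–Leibler divergence between entrywise-nonnegative matrices,
with the convention `0 * log 0 = 0`. -/
noncomputable def klDiv {n : ℕ} (P K : Fin n → Fin n → ℝ) : ℝ :=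
  ∑ i, ∑ j, P i j * (Real.log (P i j / K i j) - 1)

lemma klaux_le (p s : ℝ) (hp : 0 ≤ p) (hs : 0 < s) :
    -s ≤ p * (Real.log (p / s) - 1) := by
  rcases hp.eq_or_lt with rfl | hp
  · simp [hs.le]
  · have h := Real.log_le_sub_one_of_pos (div_pos hs hp)
    have e : Real.log (p / s) = - Real.log (s / p) := by
      rw [← Real.log_inv, inv_div]
    have h2 := mul_le_mul_of_nonneg_left h hp.le
    have h3 : p * (s / p - 1) = s - p := by field_simp
    rw [e]; linarith

lemma klaux_eq (p s : ℝ) (hp : 0 ≤ p) (hs : 0 < s)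
    (heq : p * (Real.log (p / s) - 1) = -s) : p = s := by
  rcases hp.eq_or_lt with rfl | hp
  · simp at heq; linarith
  · by_contra hne
    have h := Real.log_lt_sub_one_of_pos (div_pos hs hp)
      (fun h => hne ((div_eq_one_iff_eq hp.ne').1 h).symm)
    have e : Real.log (p / s) = - Real.log (s / p) := by
      rw [← Real.log_inv, inv_div]
    have h2 := mul_lt_mul_of_pos_left h hp
    have h3 : p * (s / p - 1) = s - p := by field_simp
    rw [e] at heq; linarith

lemma klaux_symm {n : ℕ} (K : Fin n → Fin n → ℝ) (hK : ∀ i j, 0 < K i j)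
    (P : Fin n → Fin n → ℝ) (hP : ∀ i j, P i j = P j i) :
    klDiv P K = klDiv P (fun i j => Real.sqrt (K i j * K j i)) := by
  have h1 : klDiv P K = ∑ i, ∑ j, P i j * (Real.log (P i j / K j i) - 1) := by
    unfold klDiv
    rw [Finset.sum_comm]
    refine Finset.sum_congr rfl fun i _ => Finset.sum_congr rfl fun j _ => ?_
    rw [hP j i]
  have h2 : klDiv P K + klDiv P K =
      2 * klDiv P (fun i j => Real.sqrt (K i j * K j i)) := by
    conv_lhs => arg 2; rw [h1]
    unfold klDiv
    simp only [Finset.mul_sum, ← Finset.sum_add_distrib]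
    refine Finset.sum_congr rfl fun i _ => Finset.sum_congr rfl fun j _ => ?_
    by_cases h0 : P i j = 0
    · simp [h0]
    · have a := hK i j
      have b := hK j i
      rw [Real.log_div h0 a.ne', Real.log_div h0 b.ne',
        Real.log_div h0 (Real.sqrt_pos.2 (mul_pos a b)).ne',
        Real.log_sqrt (mul_pos a b).le, Real.log_mul a.ne' b.ne']
      ring
  linarith

theorem kl_projection_onto_symmetric
    {n : ℕ} (hn : 1 ≤ n) (K : Fin n → Fin n → ℝ) (hK : ∀ i j, 0 < K i j) :
    let Pstar : Fin n → Fin n → ℝ := fun i j => Real.sqrt (K i j * K j i)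
    (∀ i j, Pstar i j = Pstar j i) ∧ (∀ i j, 0 ≤ Pstar i j) ∧
      (∀ P : Fin n → Fin n → ℝ, (∀ i j, P i j = P j i) → (∀ i j, 0 ≤ P i j) →
        klDiv Pstar K ≤ klDiv P K) ∧
      (∀ P : Fin n → Fin n → ℝ, (∀ i j, P i j = P j i) → (∀ i j, 0 ≤ P i j) →
        klDiv P K = klDiv Pstar K → P = Pstar) := by
  intro S
  have hS : ∀ i j, S i j = S j i := fun i j => by simp only [S, mul_comm]
  have hpos : ∀ i j, 0 < S i j := fun i j => Real.sqrt_pos.2 (mul_pos (hK i j) (hK j i))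
  have key : ∀ P : Fin n → Fin n → ℝ, (∀ i j, P i j = P j i) → klDiv P K = klDiv P S :=
    fun P hP => klaux_symm K hK P hP
  have hSS : klDiv S K = ∑ i, ∑ j, -S i j := by
    rw [key S hS]
    unfold klDiv
    refine Finset.sum_congr rfl fun i _ => Finset.sum_congr rfl fun j _ => ?_
    rw [div_self (hpos i j).ne']
    simp
  refine ⟨hS, fun i j => (hpos i j).le, fun P hP h0 => ?_, fun P hP h0 heq => ?_⟩
  · rw [hSS, key P hP]
    exact Finset.sum_le_sum fun i _ => Finset.sum_le_sum fun j _ =>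
      klaux_le _ _ (h0 i j) (hpos i j)
  · rw [hSS, key P hP] at heq
    unfold klDiv at heq
    have hle : ∀ i j, -S i j ≤ P i j * (Real.log (P i j / S i j) - 1) :=
      fun i j => klaux_le _ _ (h0 i j) (hpos i j)
    have e1 := (Finset.sum_eq_sum_iff_of_le
      (fun i _ => Finset.sum_le_sum fun j _ => hle i j)).1 heq.symm
    funext i j
    have e2 := (Finset.sum_eq_sum_iff_of_le (fun j _ => hle i j)).1 (e1 i (Finset.mem_univ i))
    exact klaux_eq _ _ (h0 i j) (hpos i j) (e2 j (Finset.mem_univ j)).symm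
end

section
/- Let n ≥ 2, let C ∈ ℝ^{n×n} be symmetric with nonnegative entries and C_ij = 0 iff i = j, let ν > 0 and f ∈ ℝⁿ, and define P ∈ ℝ^{n×n} by P_ij = exp((f_i + f_j − C_ij)/ν). Suppose P has unit row sums. Then P is symmetric and minimizes ⟨Q, C⟩ over all symmetric matrices Q ∈ ℝ^{n×n} with nonnegative entries, unit row sums, and total entropy ∑_i H(Q_{i:}) ≥ ∑_i H(P_{i:}). -/
open Finset

theorem ent_aux (q L : ℝ) (hq : 0 ≤ q) :
    q * L - Real.exp L ≤ q * (Real.log q - 1) := by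
  rcases hq.eq_or_lt with h | h
  · subst h
    have := Real.exp_pos L
    simp
    linarith
  · have h1 := Real.add_one_le_exp (L - Real.log q)
    rw [Real.exp_sub, Real.exp_log h, le_div_iff₀ h] at h1
    linarith

theorem frob_aux {n : ℕ} (C : Fin n → Fin n → ℝ) (ν : ℝ) (hν : 0 < ν) (f : Fin n → ℝ)
    (Q : Fin n → Fin n → ℝ) (hs : ∀ i j, Q i j = Q j i) (hr : ∀ i, ∑ j, Q i j = 1) :
    ν * (∑ i, ∑ j, Q i j * ((f i + f j - C i j) / ν)) = 2 * ∑ i, f i - frob Q C := by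
  have h1 : ∑ i, ∑ j, Q i j * f i = ∑ i, f i := by
    refine Finset.sum_congr rfl fun i _ => ?_
    rw [← Finset.sum_mul, hr, one_mul]
  have h2 : ∑ i, ∑ j, Q i j * f j = ∑ i, f i := by
    rw [Finset.sum_comm, ← h1]
    exact Finset.sum_congr rfl fun i _ => Finset.sum_congr rfl fun j _ => by rw [hs]
  have h3 : ν * (∑ i, ∑ j, Q i j * ((f i + f j - C i j) / ν))
      = ∑ i, ∑ j, (Q i j * f i + Q i j * f j - Q i j * C i j) := by
    rw [Finset.mul_sum]
    refine Finset.sum_congr rfl fun i _ => ?_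
    rw [Finset.mul_sum]
    refine Finset.sum_congr rfl fun j _ => ?_
    field_simp
  rw [h3]
  simp only [Finset.sum_sub_distrib, Finset.sum_add_distrib, h1, h2, frob]
  ring

theorem sinkhorn_plan_minimizes_entropy_constrained_OT
    {n : ℕ} (hn : 2 ≤ n)
    (C : Fin n → Fin n → ℝ) (hCsym : ∀ i j, C i j = C j i)
    (hCnn : ∀ i j, 0 ≤ C i j) (hCzero : ∀ i j, C i j = 0 ↔ i = j)
    (ν : ℝ) (hν : 0 < ν) (f : Fin n → ℝ)
    (P : Fin n → Fin n → ℝ)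
    (hP : ∀ i j, P i j = Real.exp ((f i + f j - C i j) / ν))
    (hrow : ∀ i, ∑ j, P i j = 1) :
    (∀ i j, P i j = P j i) ∧
      ∀ Q : Fin n → Fin n → ℝ,
        (∀ i j, Q i j = Q j i) → (∀ i j, 0 ≤ Q i j) → (∀ i, ∑ j, Q i j = 1) →
        (∑ i, ent (P i)) ≤ ∑ i, ent (Q i) →
        frob P C ≤ frob Q C := by
  refine ⟨fun i j => by rw [hP, hP, hCsym i j, add_comm (f i)], ?_⟩
  intro Q hQs hQn hQr hE
  have hPs : ∀ i j, P i j = P j i := fun i j => by rw [hP, hP, hCsym i j, add_comm (f i)]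
  have hp := frob_aux C ν hν f P hPs hrow
  have hq := frob_aux C ν hν f Q hQs hQr
  have e1 : ∑ i, ent (P i) =
      -(∑ i, ∑ j, P i j * ((f i + f j - C i j) / ν)) + ∑ i, ∑ j, P i j := by
    simp only [ent, ← Finset.sum_neg_distrib, ← Finset.sum_add_distrib]
    refine Finset.sum_congr rfl fun i _ => Finset.sum_congr rfl fun j _ => ?_
    have : Real.log (P i j) = (f i + f j - C i j) / ν := by rw [hP, Real.log_exp]
    rw [this]
    ring
  have e2 : ∑ i, ent (Q i) ≤
      -(∑ i, ∑ j, Q i j * ((f i + f j - C i j) / ν)) + ∑ i, ∑ j, P i j := by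
    simp only [ent, ← Finset.sum_neg_distrib, ← Finset.sum_add_distrib]
    refine Finset.sum_le_sum fun i _ => Finset.sum_le_sum fun j _ => ?_
    have := ent_aux (Q i j) ((f i + f j - C i j) / ν) (hQn i j)
    rw [hP i j]
    linarith
  have e3 : ∑ i, ∑ j, Q i j * ((f i + f j - C i j) / ν)
      ≤ ∑ i, ∑ j, P i j * ((f i + f j - C i j) / ν) := by linarith
  have e4 := mul_le_mul_of_nonneg_left e3 hν.le
  linarith
end

section
/- Let n ≥ 2, let ξ be a real number with 1 ≤ ξ ≤ n−1, and let C ∈ ℝ^{n×n} be symmetric with nonnegative entries and C_ij = 0 iff i = j. Suppose P^{se} ∈ H_ξ ∩ S has all entries positive and there exist γ ∈ ℝⁿ with all entries positive, λ ∈ ℝⁿ, and Γ ∈ ℝ^{n×n} such that C_ij + γ_i log P^{se}_ij − λ_i + Γ_ij − Γ_ji = 0 for all i, j, and γ_i (H(P^{se}_{i:}) − (log ξ + 1)) = 0 for all i. Then for every σ with 0 < σ ≤ min_i γ_i, setting K_σ = (exp(−C_ij/σ))_{ij}, the matrix P^{se} is the unique minimizer of P ↦ KL(P|K_σ) over H_ξ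 ∩ S. -/
open Finset

lemma kl_pt {p q : ℝ} (hp : 0 ≤ p) (hq : 0 < q) :
    0 ≤ p * Real.log p - p * Real.log q - p + q ∧
      (p * Real.log p - p * Real.log q - p + q = 0 → p = q) := by
  rcases hp.eq_or_lt with h | h
  · subst h
    simp only [zero_mul, sub_zero, zero_add]
    exact ⟨hq.le, fun h => by linarith⟩
  · have hd : 0 < q / p := div_pos hq h
    have hl : Real.log (q / p) = Real.log q - Real.log p := Real.log_div hq.ne' h.ne'
    have hm : p * (q / p) = q := by field_simp
    constructor
    · have := mul_le_mul_of_nonneg_left (Real.log_le_sub_one_of_pos hd) hp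
      rw [hl] at this
      linarith
    · intro h0
      by_contra hne
      have h1 : q / p ≠ 1 := by
        intro h1
        rw [h1] at hm
        exact hne (by linarith)
      have := mul_lt_mul_of_pos_left (Real.log_lt_sub_one_of_pos hd h1) h
      rw [hl] at this
      linarith

lemma antisym_sum {n : ℕ} (R Γ : Fin n → Fin n → ℝ) (hR : ∀ i j, R i j = R j i) :
    ∑ i, ∑ j, R i j * (Γ i j - Γ j i) = 0 := by
  have h : ∑ i, ∑ j, R i j * Γ i j = ∑ i, ∑ j, R i j * Γ j i := by
    rw [Finset.sum_comm]
    exact Finset.sum_congr rfl fun i _ => Finset.sum_congr rfl fun j _ => by rw [hR]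
  simp only [mul_sub, Finset.sum_sub_distrib]
  linarith

lemma log_term {p c σ : ℝ} (hσ : 0 < σ) :
    σ * (p * (Real.log (p / Real.exp (-c / σ)) - 1)) = σ * (p * (Real.log p - 1)) + p * c := by
  rcases eq_or_ne p 0 with h | h
  · simp [h]
  · rw [Real.log_div h (Real.exp_pos _).ne', Real.log_exp]
    field_simp
    ring

lemma key_id {n : ℕ} (C P Q Γ : Fin n → Fin n → ℝ) (γ lam : Fin n → ℝ) (σ : ℝ) (hσ0 : 0 < σ)
    (hP1 : ∀ i, ∑ j, P i j = 1) (hQ1 : ∀ i, ∑ j, Q i j = 1)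
    (hP : ∀ i j, P i j = P j i) (hQ : ∀ i j, Q i j = Q j i)
    (hstat : ∀ i j, C i j + γ i * Real.log (Q i j) - lam i + Γ i j - Γ j i = 0) :
    σ * klDiv P (fun i j => Real.exp (-C i j / σ)) - σ * klDiv Q (fun i j => Real.exp (-C i j / σ))
      = ∑ i, (γ i * ∑ j, (P i j * Real.log (P i j) - P i j * Real.log (Q i j) - P i j + Q i j)
          + (γ i - σ) * (ent (P i) - ent (Q i))) := by
  have hA := antisym_sum (fun i j => P i j - Q i j) Γ (fun i j => by simp only [hP i j, hQ i j])
  have hL : ∑ i, ∑ j, (P i j - Q i j) * lam i = 0 := by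
    simp [← Finset.sum_mul, Finset.sum_sub_distrib, hP1, hQ1]
  have : ∀ i, γ i * ∑ j, (P i j * Real.log (P i j) - P i j * Real.log (Q i j) - P i j + Q i j)
          + (γ i - σ) * (ent (P i) - ent (Q i)) =
      ∑ j, (γ i * (P i j * Real.log (P i j) - P i j * Real.log (Q i j) - P i j + Q i j)
        - (γ i - σ) * (P i j * (Real.log (P i j) - 1) - Q i j * (Real.log (Q i j) - 1))) := by
    intro i
    rw [Finset.sum_sub_distrib, ← Finset.mul_sum, ← Finset.mul_sum,
      Finset.sum_sub_distrib (fun j => P i j * (Real.log (P i j) - 1))]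
    unfold ent
    ring
  simp only [this]
  have hz : ∑ i, ∑ j, ((P i j - Q i j) * lam i - (P i j - Q i j) * (Γ i j - Γ j i)) = 0 := by
    simp only [Finset.sum_sub_distrib] at hA hL ⊢
    rw [hL, hA, sub_zero]
  rw [← add_zero (∑ i, ∑ j, (_ : ℝ)), ← hz]
  unfold klDiv
  simp only [Finset.mul_sum, log_term hσ0]
  rw [← Finset.sum_sub_distrib, ← Finset.sum_add_distrib]
  refine Finset.sum_congr rfl fun i _ => ?_
  rw [← Finset.sum_sub_distrib, ← Finset.sum_add_distrib]
  refine Finset.sum_congr rfl fun j _ => ?_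
  linear_combination (P i j - Q i j) * hstat i j

theorem sea_as_KL_projection
    {n : ℕ} (hn : 2 ≤ n) (ξ : ℝ) (hξ1 : 1 ≤ ξ) (hξ2 : ξ ≤ (n : ℝ) - 1)
    (C : Fin n → Fin n → ℝ) (hCsym : ∀ i j, C i j = C j i)
    (hCnn : ∀ i j, 0 ≤ C i j) (hCzero : ∀ i j, C i j = 0 ↔ i = j)
    (Pse : Fin n → Fin n → ℝ) (hPse : Hxi ξ Pse) (hPsym : ∀ i j, Pse i j = Pse j i)
    (hPpos : ∀ i j, 0 < Pse i j)
    (γ : Fin n → ℝ) (hγ : ∀ i, 0 < γ i) (lam : Fin n → ℝ) (Γ : Fin n → Fin n → ℝ)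
    (hstat : ∀ i j, C i j + γ i * Real.log (Pse i j) - lam i + Γ i j - Γ j i = 0)
    (hslack : ∀ i, γ i * (ent (Pse i) - (Real.log ξ + 1)) = 0)
    (σ : ℝ) (hσ0 : 0 < σ) (hσ : ∀ i, σ ≤ γ i) :
    let Kσ : Fin n → Fin n → ℝ := fun i j => Real.exp (-C i j / σ)
    (∀ P, Hxi ξ P → (∀ i j, P i j = P j i) → klDiv Pse Kσ ≤ klDiv P Kσ) ∧
      (∀ P, Hxi ξ P → (∀ i j, P i j = P j i) →
        klDiv P Kσ = klDiv Pse Kσ → P = Pse) := by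
  intro Kσ
  have main : ∀ P, Hxi ξ P → (∀ i j, P i j = P j i) →
      ∑ i, γ i * ∑ j, (P i j * Real.log (P i j) - P i j * Real.log (Pse i j) - P i j + Pse i j)
        ≤ σ * klDiv P Kσ - σ * klDiv Pse Kσ := by
    intro P hP hs
    rw [key_id C P Pse Γ γ lam σ hσ0 hP.2.1 hPse.2.1 hs hPsym hstat]
    refine Finset.sum_le_sum fun i _ => ?_
    have h1 : ent (Pse i) - (Real.log ξ + 1) = 0 :=
      (mul_eq_zero.mp (hslack i)).resolve_left (hγ i).ne'
    have h2 := hP.2.2 i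
    have := mul_nonneg (sub_nonneg.2 (hσ i)) (show 0 ≤ ent (P i) - ent (Pse i) by linarith)
    linarith
  have nn : ∀ P, Hxi ξ P → ∀ i j,
      0 ≤ P i j * Real.log (P i j) - P i j * Real.log (Pse i j) - P i j + Pse i j :=
    fun P hP i j => (kl_pt (hP.1 i j) (hPpos i j)).1
  have nn2 : ∀ P, Hxi ξ P → ∀ i, 0 ≤ γ i * ∑ j,
      (P i j * Real.log (P i j) - P i j * Real.log (Pse i j) - P i j + Pse i j) :=
    fun P hP i => mul_nonneg (hγ i).le (Finset.sum_nonneg fun j _ => nn P hP i j)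
  constructor
  · intro P hP hs
    have h1 := main P hP hs
    have h2 := Finset.sum_nonneg fun i (_ : i ∈ Finset.univ) => nn2 P hP i
    exact le_of_mul_le_mul_left (by linarith) hσ0
  · intro P hP hs he
    have h1 := main P hP hs
    rw [he, sub_self] at h1
    have h2 := le_antisymm h1 (Finset.sum_nonneg fun i _ => nn2 P hP i)
    rw [Finset.sum_eq_zero_iff_of_nonneg fun i _ => nn2 P hP i] at h2
    funext i j
    have h3 := (mul_eq_zero.mp (h2 i (Finset.mem_univ i))).resolve_left (hγ i).ne'
    rw [Finset.sum_eq_zero_iff_of_nonneg fun j _ => nn P hP i j] at h3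
    exact (kl_pt (hP.1 i j) (hPpos i j)).2 (h3 j (Finset.mem_univ j))
end

section
/- Let n ≥ 2, let ξ be a real number with 1 ≤ ξ ≤ n−1, and let K ∈ ℝ^{n×n} have all entries positive. Let ρ ∈ ℝⁿ with ρ_i ≥ 1 for all i, and define Q by Q_ij = K_ij^{1/ρ_i} / ∑_ℓ K_iℓ^{1/ρ_i}. Suppose that H(Q_{i:}) ≥ log ξ + 1 for every i, and that H(Q_{i:}) = log ξ + 1 for every i with ρ_i > 1. Then Q is the unique minimizer of P ↦ KL(P|K) over H_ξ. -/
open Finset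

lemma kl_aux_nonneg (p q : ℝ) (hp : 0 ≤ p) (hq : 0 < q) :
    0 ≤ p * Real.log p - p * Real.log q - p + q ∧
      (p * Real.log p - p * Real.log q - p + q = 0 → p = q) := by
  rcases hp.eq_or_lt with rfl | hp
  · constructor
    · simp [hq.le]
    · intro h; simpa using h.symm
  · by_cases hpq : p = q
    · subst hpq; simp
    · have h1 : q / p ≠ 1 := by
        intro h; rw [div_eq_one_iff_eq hp.ne'] at h; exact hpq h.symm
      have h2 := Real.log_lt_sub_one_of_pos (div_pos hq hp) h1
      rw [Real.log_div hq.ne' hp.ne'] at h2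
      have h3 := mul_lt_mul_of_pos_left h2 hp
      have h4 : p * (q / p - 1) = q - p := by field_simp
      rw [h4] at h3
      have : 0 < p * Real.log p - p * Real.log q - p + q := by nlinarith
      exact ⟨this.le, fun h => absurd h this.ne'⟩

lemma kl_row_expand {n : ℕ} (r c : ℝ) (k q p : Fin n → ℝ) (hk : ∀ j, 0 < k j)
    (hlog : ∀ j, Real.log (k j) = r * (Real.log (q j) + c))
    (hp : ∀ j, 0 ≤ p j) (hp1 : ∑ j, p j = 1) (hq1 : ∑ j, q j = 1) :
    ∑ j, p j * (Real.log (p j / k j) - 1) =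
      r * (∑ j, (p j * Real.log (p j) - p j * Real.log (q j) - p j + q j))
        + (r - 1) * (ent p - 1) - r * c - 1 := by
  have h : ∀ j, p j * (Real.log (p j / k j) - 1) =
      r * (p j * Real.log (p j) - p j * Real.log (q j) - p j + q j)
        - (r - 1) * (p j * (Real.log (p j) - 1)) + (- r * c) * p j + r * p j
        - r * q j - r * p j + (r - 1) * p j * (-1) + (r - 1) * p j - p j + r * p j
        - (r - 1) * p j := by
    intro j
    rcases (hp j).eq_or_lt with h0 | h0
    · simp [← h0]
    · rw [Real.log_div h0.ne' (hk j).ne', hlog]; ring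
  rw [Finset.sum_congr rfl (fun j _ => h j)]
  simp only [ent, Finset.sum_add_distrib, Finset.sum_sub_distrib, ← Finset.mul_sum,
    ← Finset.sum_mul, hp1, hq1]
  ring

theorem kl_projection_onto_Hxi
    {n : ℕ} (hn : 2 ≤ n) (ξ : ℝ) (hξ1 : 1 ≤ ξ) (hξ2 : ξ ≤ (n : ℝ) - 1)
    (K : Fin n → Fin n → ℝ) (hK : ∀ i j, 0 < K i j)
    (ρ : Fin n → ℝ) (hρ : ∀ i, 1 ≤ ρ i)
    (Q : Fin n → Fin n → ℝ)
    (hQ : ∀ i j, Q i j = K i j ^ (1 / ρ i) / ∑ l, K i l ^ (1 / ρ i))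
    (hent : ∀ i, Real.log ξ + 1 ≤ ent (Q i))
    (hsat : ∀ i, 1 < ρ i → ent (Q i) = Real.log ξ + 1) :
    Hxi ξ Q ∧ (∀ P, Hxi ξ P → klDiv Q K ≤ klDiv P K) ∧
      (∀ P, Hxi ξ P → klDiv P K = klDiv Q K → P = Q) := by
  have hS : ∀ i, 0 < ∑ l, K i l ^ (1 / ρ i) := fun i =>
    Finset.sum_pos (fun l _ => Real.rpow_pos_of_pos (hK i l) _) ⟨i, Finset.mem_univ i⟩
  have hQpos : ∀ i j, 0 < Q i j := fun i j => by
    rw [hQ]; exact div_pos (Real.rpow_pos_of_pos (hK i j) _) (hS i)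
  have hQ1 : ∀ i, ∑ j, Q i j = 1 := fun i => by
    simp only [hQ]
    rw [← Finset.sum_div, div_self (hS i).ne']
  have hlog : ∀ i j, Real.log (K i j) =
      ρ i * (Real.log (Q i j) + Real.log (∑ l, K i l ^ (1 / ρ i))) := fun i j => by
    have h0 : ρ i ≠ 0 := by linarith [hρ i]
    rw [hQ, Real.log_div (Real.rpow_pos_of_pos (hK i j) _).ne' (hS i).ne',
      Real.log_rpow (hK i j)]
    field_simp
    ring
  have hterm : ∀ P, Hxi ξ P → ∀ i j,
      0 ≤ P i j * Real.log (P i j) - P i j * Real.log (Q i j) - P i j + Q i j :=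
    fun P hP i j => (kl_aux_nonneg _ _ (hP.1 i j) (hQpos i j)).1
  have key : ∀ P, Hxi ξ P → ∀ i,
      ∑ j, (P i j * Real.log (P i j) - P i j * Real.log (Q i j) - P i j + Q i j) ≤
      ∑ j, P i j * (Real.log (P i j / K i j) - 1)
        - ∑ j, Q i j * (Real.log (Q i j / K i j) - 1) := by
    intro P hP i
    have e1 := kl_row_expand (ρ i) _ (K i) (Q i) (P i) (hK i) (hlog i) (hP.1 i) (hP.2.1 i) (hQ1 i)
    have e2 := kl_row_expand (ρ i) _ (K i) (Q i) (Q i) (hK i) (hlog i)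
      (fun j => (hQpos i j).le) (hQ1 i) (hQ1 i)
    have e3 : ∑ j, (Q i j * Real.log (Q i j) - Q i j * Real.log (Q i j) - Q i j + Q i j) = 0 :=
      Finset.sum_eq_zero (fun j _ => by ring)
    rw [e3] at e2
    have hD := Finset.sum_nonneg (fun j (_ : j ∈ Finset.univ) => hterm P hP i j)
    have h5 : 0 ≤ (ρ i - 1) * (ent (P i) - ent (Q i)) := by
      rcases (hρ i).eq_or_lt with h | h
      · simp [← h]
      · exact mul_nonneg (by linarith) (by linarith [hsat i h, hP.2.2 i])
    have h6 := mul_nonneg (sub_nonneg.2 (hρ i)) hD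
    rw [e1, e2]
    linarith
  have key2 : ∀ P, Hxi ξ P →
      ∑ i, ∑ j, (P i j * Real.log (P i j) - P i j * Real.log (Q i j) - P i j + Q i j) ≤
      klDiv P K - klDiv Q K := by
    intro P hP
    unfold klDiv
    rw [← Finset.sum_sub_distrib]
    exact Finset.sum_le_sum (fun i _ => key P hP i)
  have hrow : ∀ P, Hxi ξ P → ∀ i ∈ Finset.univ, 0 ≤
      ∑ j, (P i j * Real.log (P i j) - P i j * Real.log (Q i j) - P i j + Q i j) :=
    fun P hP i _ => Finset.sum_nonneg (fun j _ => hterm P hP i j)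
  refine ⟨⟨fun i j => (hQpos i j).le, hQ1, hent⟩, ?_, ?_⟩
  · intro P hP
    linarith [key2 P hP, Finset.sum_nonneg (hrow P hP)]
  · intro P hP heq
    have h0 := le_antisymm (by linarith [key2 P hP]) (Finset.sum_nonneg (hrow P hP))
    rw [Finset.sum_eq_zero_iff_of_nonneg (hrow P hP)] at h0
    funext i j
    have h1 := h0 i (Finset.mem_univ i)
    rw [Finset.sum_eq_zero_iff_of_nonneg (fun j _ => hterm P hP i j)] at h1
    exact (kl_aux_nonneg _ _ (hP.1 i j) (hQpos i j)).2 (h1 j (Finset.mem_univ j))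
end
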